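/- Let G be a projection game and let h : V × Σ → [0,1] be deterministic (for each v ∈ V there is at most one β ∈ Σ with h(v,β) ≠ 0) with ‖h‖ > 0, and let ρ ∈ [0,1] be such that ‖Gh‖² = ρ·‖h‖². For τ ∈ [0,1] define h_τ : V × Σ → {0,1} by h_τ(v,β) = 1 if h(v,β)² > τ and h_τ(v,β) = 0 otherwise. Then: (i) for every v ∈ V, ∫₀¹ (∑_β h_τ(v,β))² dτ = (∑_β h(v,β))²; and (ii) ∫₀¹ ‖G h_τ‖² dτ ≥ (1 − √(1−ρ²))·‖h‖². -/

import Mathlib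

open Finset

/-- A projection game: finite nonempty question sets `Q1` (Alice) and `Q2` (Bob),
a finite nonempty alphabet `A`, and a probability mass function `μ` on triples
`(u, v, π)` where `π : A → Option A` encodes a projection constraint
(the answer pair `(α, β)` satisfies `π` iff `π β = some α`). -/
structure ProjGame where
  Q1 : Type
  Q2 : Type
  A : Type
  [fQ1 : Fintype Q1]
  [fQ2 : Fintype Q2]
  [fA : Fintype A]
  [neQ1 : Nonempty Q1]
  [neQ2 : Nonempty Q2]
  [neA : Nonempty A]
  [dQ1 : DecidableEq Q1]
  [dQ2 : DecidableEq Q2]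
  [dA : DecidableEq A]
  μ : Q1 × Q2 × (A → Option A) → ℝ
  μ_nonneg : ∀ x, 0 ≤ μ x
  μ_sum : ∑ x, μ x = 1

attribute [instance] ProjGame.fQ1 ProjGame.fQ2 ProjGame.fA
  ProjGame.neQ1 ProjGame.neQ2 ProjGame.neA ProjGame.dQ1 ProjGame.dQ2 ProjGame.dA

namespace ProjGame

variable (G : ProjGame)

/-- The `U`-marginal (Alice-side marginal) of `μ`. -/
noncomputable def wU (u : G.Q1) : ℝ := ∑ v, ∑ π, G.μ (u, v, π)

/-- The `V`-marginal (Bob-side marginal) of `μ`. -/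
noncomputable def wV (v : G.Q2) : ℝ := ∑ u, ∑ π, G.μ (u, v, π)

/-- The game operator: `(Gf)(u,α) = E_{(v,π)|u} [∑_{β : π β = some α} f (v,β)]`. -/
noncomputable def op (f : G.Q2 × G.A → ℝ) : G.Q1 × G.A → ℝ :=
  fun p =>
    (∑ v, ∑ π, G.μ (p.1, v, π) * ∑ β, if π β = some p.2 then f (v, β) else 0) / G.wU p.1

/-- Squared norm on functions on `U × Σ`: `‖g‖² = E_u [∑_α g(u,α)²]`. -/
noncomputable def normUsq (g : G.Q1 × G.A → ℝ) : ℝ := ∑ u, G.wU u * ∑ α, (g (u, α)) ^ 2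

/-- Squared norm on functions on `V × Σ`: `‖f‖² = E_v [∑_β f(v,β)²]`. -/
noncomputable def normVsq (f : G.Q2 × G.A → ℝ) : ℝ := ∑ v, G.wV v * ∑ β, (f (v, β)) ^ 2

/-- Inner product `⟨g, g'⟩ = E_u [∑_α g(u,α) g'(u,α)]`. -/
noncomputable def inn (g g' : G.Q1 × G.A → ℝ) : ℝ :=
  ∑ u, G.wU u * ∑ α, g (u, α) * g' (u, α)

/-- An assignment for Bob. -/
def IsBob (f : G.Q2 × G.A → ℝ) : Prop := (∀ p, 0 ≤ f p) ∧ ∀ v, ∑ β, f (v, β) = 1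

/-- An assignment for Alice. -/
def IsAlice (g : G.Q1 × G.A → ℝ) : Prop := (∀ p, 0 ≤ g p) ∧ ∀ u, ∑ α, g (u, α) = 1

/-- The value of the game: `val(G) = max ⟨g, Gf⟩` over assignments. -/
noncomputable def val : ℝ :=
  sSup { x | ∃ f g, G.IsBob f ∧ G.IsAlice g ∧ x = G.inn g (G.op f) }

/-- The collision value `‖G‖ = max_f ‖Gf‖` over assignments `f` for Bob. -/
noncomputable def collVal : ℝ :=
  sSup { x | ∃ f, G.IsBob f ∧ x = Real.sqrt (G.normUsq (G.op f)) }

/-- Product of projection constraints. -/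
def tensorC {A A' : Type} (π : A → Option A) (π' : A' → Option A') :
    A × A' → Option (A × A') :=
  fun b => (π b.1).bind fun a => (π' b.2).map fun a' => (a, a')

/-- The product (parallel repetition) of two projection games. -/
noncomputable def tensor (G H : ProjGame) : ProjGame where
  Q1 := G.Q1 × H.Q1
  Q2 := G.Q2 × H.Q2
  A := G.A × H.A
  μ := fun x =>
    ∑ y : (G.Q1 × G.Q2 × (G.A → Option G.A)) × (H.Q1 × H.Q2 × (H.A → Option H.A)),
      if ((y.1.1, y.2.1), (y.1.2.1, y.2.2.1), tensorC y.1.2.2 y.2.2.2) = x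
      then G.μ y.1 * H.μ y.2 else 0
  μ_nonneg := by
    intro x
    refine Finset.sum_nonneg fun y _ => ?_
    split
    · exact mul_nonneg (G.μ_nonneg _) (H.μ_nonneg _)
    · exact le_refl 0
  μ_sum := by
    rw [Finset.sum_comm]
    simp only [Finset.sum_ite_eq, Finset.mem_univ, if_true]
    rw [Fintype.sum_prod_type]
    calc (∑ y1, ∑ y2, G.μ y1 * H.μ y2)
        = (∑ y1, G.μ y1) * (∑ y2, H.μ y2) := by rw [Finset.sum_mul_sum]
      _ = 1 := by rw [G.μ_sum, H.μ_sum, mul_one]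

/-- `G.iterTensor k` is the `(k+1)`-fold parallel repetition `G^{⊗(k+1)}`. -/
noncomputable def iterTensor (G : ProjGame) : ℕ → ProjGame
  | 0 => G
  | n + 1 => G.tensor (G.iterTensor n)

/-- `val₊(G)`: supremum of values of vector assignments. -/
noncomputable def valPlus (G : ProjGame) : ℝ :=
  sSup { x | ∃ n : ℕ, 0 < n ∧ ∃ f : G.Q2 × G.A → Fin n → ℝ,
    (∀ p i, 0 ≤ f p i) ∧
    (∀ v, Real.sqrt (∑ i, (∑ β, f (v, β) i) ^ 2) ≤ 1) ∧
    x = Real.sqrt (∑ u, G.wU u * ∑ α, ∑ i, (G.op (fun q => f q i) (u, α)) ^ 2) }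

/-- `‖Th‖² = E_v [(∑_β h(v,β))²]`. -/
noncomputable def Tnormsq (G : ProjGame) (h : G.Q2 × G.A → ℝ) : ℝ :=
  ∑ v, G.wV v * (∑ β, h (v, β)) ^ 2

/-- `λ₊(G)`: supremum of `‖Gh‖/‖Th‖` over nonnegative `h` with `‖Th‖ > 0`. -/
noncomputable def lambdaPlus (G : ProjGame) : ℝ :=
  sSup { x | ∃ h : G.Q2 × G.A → ℝ, (∀ p, 0 ≤ h p) ∧
    0 < Real.sqrt (G.Tnormsq h) ∧
    x = Real.sqrt (G.normUsq (G.op h)) / Real.sqrt (G.Tnormsq h) }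

/-- The symmetrized distribution on `V × V` (with the constraints marginalized out). -/
noncomputable def msym (G : ProjGame) (v v' : G.Q2) : ℝ :=
  ∑ u, ((∑ π, G.μ (u, v, π)) * (∑ π', G.μ (u, v', π'))) / G.wU u

/-- `G` is `γ`-expanding: the Markov operator of the symmetrized constraint graph has
spectral gap at least `γ`, i.e. `|⟨x, Ax⟩| ≤ (1-γ) E_v[x(v)²]` for mean-zero `x`. -/
def IsExpanding (G : ProjGame) (γ : ℝ) : Prop :=
  ∀ x : G.Q2 → ℝ, (∑ v, G.wV v * x v) = 0 →
    |∑ v, ∑ v', G.msym v v' * x v * x v'| ≤ (1 - γ) * ∑ v, G.wV v * (x v) ^ 2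

/-- The symmetrized distribution on `(v, v', π, π')`. -/
noncomputable def msymFull (G : ProjGame) (v v' : G.Q2) (π π' : G.A → Option G.A) : ℝ :=
  ∑ u, (G.μ (u, v, π) * G.μ (u, v', π')) / G.wU u

/-- The value of the assignment `x` in the symmetrized game `G_sym`. -/
noncomputable def symValAssign (G : ProjGame) (x : G.Q2 → G.A) : ℝ :=
  ∑ v, ∑ v', ∑ π, ∑ π', G.msymFull v v' π π' *
    (if ∃ α, π (x v) = some α ∧ π' (x v') = some α then 1 else 0)

/-- The value of the symmetrized game `G_sym`. -/
noncomputable def symVal (G : ProjGame) : ℝ :=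
  sSup { r | ∃ x : G.Q2 → G.A, r = G.symValAssign x }

end ProjGame

/-!
A common threshold level couples the roundings of `x` and `y` so that, on average over the level,
`threshold τ x * threshold τ y` is `min (x ^ 2) (y ^ 2)`. As `h` is deterministic, rounding commutes
with the sums over the fibers of a projection constraint. Hence `‖h‖²`, `‖Gh‖²` and `∫ ‖G h_τ‖² dτ`
are averages of local quantities `n`, `s = ∑ x * y` and `m = ∑ min (x ^ 2) (y ^ 2)` over two queries
of Bob that are conditionally independent given Alice's question; `x` and `y` are the weights they
induce on Alice's answers, and `∑ x ^ 2 + ∑ y ^ 2 ≤ 2 * n`. By Cauchy–Schwarz and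
`min * max = x ^ 2 * y ^ 2`, each pair of queries satisfies `(n - m) ^ 2 + s ^ 2 ≤ n ^ 2`. This
places `(n - m, s, n)` in a convex cone, so the inequality survives averaging, and solving it for
the average of `m` gives the bound.
-/

section SubsingletonSupport

variable {ι M : Type*}

lemma eq_zero_or_exists_forall_ne_of_support_subsingleton [Zero M] {f : ι → M}
    (hf : (Function.support f).Subsingleton) : f = 0 ∨ ∃ i, ∀ j, j ≠ i → f j = 0 := by
  refine or_iff_not_imp_left.mpr fun hne => ?_
  obtain ⟨i, hi⟩ := Function.ne_iff.mp hne
  exact ⟨i, fun j hji => by_contra fun hj => hji (hf hj hi)⟩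

variable [Fintype ι] [AddCommMonoid M] {f : ι → M}

lemma sum_mem_of_support_subsingleton (hf : (Function.support f).Subsingleton) {s : Set M}
    (h0 : 0 ∈ s) (hs : ∀ i, f i ∈ s) : ∑ i, f i ∈ s := by
  rcases eq_zero_or_exists_forall_ne_of_support_subsingleton hf with rfl | ⟨i, hi⟩
  · simpa using h0
  · exact (Fintype.sum_eq_single i hi).symm ▸ hs i

lemma sum_comp_of_support_subsingleton {N : Type*} [AddCommMonoid N]
    (hf : (Function.support f).Subsingleton) {φ : M → N} (hφ : φ 0 = 0) :
    ∑ i, φ (f i) = φ (∑ i, f i) := by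
  rcases eq_zero_or_exists_forall_ne_of_support_subsingleton hf with rfl | ⟨i, hi⟩
  · simp [hφ]
  · rw [Fintype.sum_eq_single i hi, Fintype.sum_eq_single i fun j hj => by rw [hi j hj, hφ]]

end SubsingletonSupport

section Threshold

/-- The rounding of `x` at level `τ`, i.e. the scalar function behind `h_τ`. -/
noncomputable def threshold (τ x : ℝ) : ℝ := if x ^ 2 > τ then 1 else 0

lemma threshold_zero {τ : ℝ} (hτ : 0 ≤ τ) : threshold τ 0 = 0 := by
  simp [threshold, hτ]

lemma threshold_mul_threshold (τ x y : ℝ) :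
    threshold τ x * threshold τ y = if τ < min (x ^ 2) (y ^ 2) then 1 else 0 := by
  simp only [threshold, gt_iff_lt, lt_min_iff, ite_and, ite_mul, one_mul, zero_mul]

lemma antitone_ite_lt (a : ℝ) : Antitone fun τ : ℝ => if τ < a then (1 : ℝ) else 0 := by
  intro τ τ' hle
  dsimp only
  split_ifs with h' h
  · exact le_rfl
  · exact absurd (hle.trans_lt h') h
  · exact zero_le_one
  · exact le_rfl

lemma integral_ite_lt {a T : ℝ} (ha : 0 ≤ a) (haT : a ≤ T) :
    ∫ τ in (0 : ℝ)..T, (if τ < a then (1 : ℝ) else 0) = a := by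
  have hae : ∀ᵐ τ : ℝ, τ ∈ Set.uIoc 0 T →
      (if τ < a then (1 : ℝ) else 0) = Set.indicator {τ | τ ≤ a} (fun _ => 1) τ := by
    filter_upwards [MeasureTheory.Measure.ae_ne MeasureTheory.volume a] with τ hne _
    simp [Set.indicator_apply, hne.le_iff_lt]
  rw [intervalIntegral.integral_congr_ae hae, intervalIntegral.integral_indicator ⟨ha, haT⟩]
  simp

lemma intervalIntegrable_threshold_mul_threshold (x y a b : ℝ) :
    IntervalIntegrable (fun τ => threshold τ x * threshold τ y) MeasureTheory.volume a b := by
  simp only [threshold_mul_threshold]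
  exact (antitone_ite_lt _).intervalIntegrable

lemma integral_threshold_mul_threshold {x T : ℝ} (hx : x ^ 2 ≤ T) (y : ℝ) :
    ∫ τ in (0 : ℝ)..T, threshold τ x * threshold τ y = min (x ^ 2) (y ^ 2) := by
  simp only [threshold_mul_threshold]
  exact integral_ite_lt (le_min (sq_nonneg x) (sq_nonneg y)) ((min_le_left _ _).trans hx)

lemma integral_sq_sum_threshold {ι : Type*} [Fintype ι] {f : ι → ℝ} {T : ℝ} (hT : 0 ≤ T)
    (hf : (Function.support f).Subsingleton) (hfT : ∀ i, f i ^ 2 ≤ T) :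
    ∫ τ in (0 : ℝ)..T, (∑ i, threshold τ (f i)) ^ 2 = (∑ i, f i) ^ 2 := by
  have hsum : (∑ i, f i) ^ 2 ≤ T :=
    sum_mem_of_support_subsingleton hf (s := {x | x ^ 2 ≤ T}) (by simpa using hT) hfT
  calc ∫ τ in (0 : ℝ)..T, (∑ i, threshold τ (f i)) ^ 2
      = ∫ τ in (0 : ℝ)..T, threshold τ (∑ i, f i) * threshold τ (∑ i, f i) := by
        refine intervalIntegral.integral_congr fun τ hτ => ?_
        rw [Set.uIcc_of_le hT] at hτ
        simp only [sum_comp_of_support_subsingleton hf (threshold_zero hτ.1), sq]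
    _ = (∑ i, f i) ^ 2 := by rw [integral_threshold_mul_threshold hsum, min_self]

end Threshold

section FiberSum

variable {A B : Type*} [DecidableEq A]

lemma support_ite_eq_some_subsingleton {M : Type*} [Zero M] (π : B → Option A) {f : B → M}
    (hf : (Function.support f).Subsingleton) (α : A) :
    (Function.support fun β => if π β = some α then f β else 0).Subsingleton :=
  hf.anti fun _ hβ => (ite_ne_right_iff.mp hβ).2

variable [Fintype B]

/-- The sums of `f` over the fibers of a partial map `π`: the answer weights that a projection
constraint `π` induces on Alice's side from the weights `f` of Bob's answers. -/
def fiberSum {M : Type*} [AddCommMonoid M] (π : B → Option A) (f : B → M) (α : A) : M :=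
  ∑ β, if π β = some α then f β else 0

variable (π : B → Option A)

lemma fiberSum_mem {M : Type*} [AddCommMonoid M] {f : B → M} {s : Set M}
    (hf : (Function.support f).Subsingleton) (h0 : 0 ∈ s) (hs : ∀ β, f β ∈ s) (α : A) :
    fiberSum π f α ∈ s :=
  sum_mem_of_support_subsingleton (support_ite_eq_some_subsingleton π hf α) h0 fun β => by
    split_ifs
    exacts [hs β, h0]

lemma fiberSum_comp {M N : Type*} [AddCommMonoid M] [AddCommMonoid N] {f : B → M}
    (hf : (Function.support f).Subsingleton) {φ : M → N} (hφ : φ 0 = 0) (α : A) :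
    fiberSum π (fun β => φ (f β)) α = φ (fiberSum π f α) := by
  simp only [fiberSum, ← sum_comp_of_support_subsingleton
    (support_ite_eq_some_subsingleton π hf α) hφ, apply_ite φ, hφ]

lemma sum_fiberSum_le [Fintype A] {f : B → ℝ} (hf : ∀ β, 0 ≤ f β) :
    ∑ α, fiberSum π f α ≤ ∑ β, f β := by
  simp only [fiberSum]
  rw [Finset.sum_comm]
  refine Finset.sum_le_sum fun β _ => ?_
  cases π β with
  | none => simpa using hf β
  | some α => simp

lemma sum_sq_fiberSum_le [Fintype A] {f : B → ℝ} (hf : (Function.support f).Subsingleton) :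
    ∑ α, fiberSum π f α ^ 2 ≤ ∑ β, f β ^ 2 := by
  simpa only [fiberSum_comp π hf (φ := (· ^ 2)) (zero_pow two_ne_zero)] using
    sum_fiberSum_le π fun β => sq_nonneg (f β)

end FiberSum

section Cone

variable {ι : Type*} (s : Finset ι)

lemma sq_sub_sum_min_add_sq_sum_mul_le {x y : ι → ℝ} {n : ℝ}
    (hn : ∑ i ∈ s, x i ^ 2 + ∑ i ∈ s, y i ^ 2 ≤ 2 * n) :
    (n - ∑ i ∈ s, min (x i ^ 2) (y i ^ 2)) ^ 2 + (∑ i ∈ s, x i * y i) ^ 2 ≤ n ^ 2 := by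
  set m := ∑ i ∈ s, min (x i ^ 2) (y i ^ 2) with hm
  have hm_nonneg : 0 ≤ m := Finset.sum_nonneg fun i _ => le_min (sq_nonneg _) (sq_nonneg _)
  have hmax : ∑ i ∈ s, max (x i ^ 2) (y i ^ 2) ≤ 2 * n - m := by
    have hadd : m + ∑ i ∈ s, max (x i ^ 2) (y i ^ 2) = ∑ i ∈ s, x i ^ 2 + ∑ i ∈ s, y i ^ 2 := by
      simp only [hm, ← Finset.sum_add_distrib, min_add_max]
    linarith
  have hmul : (∑ i ∈ s, x i * y i) ^ 2 ≤ m * (2 * n - m) :=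
    calc (∑ i ∈ s, x i * y i) ^ 2
        ≤ m * ∑ i ∈ s, max (x i ^ 2) (y i ^ 2) :=
          Finset.sum_sq_le_sum_mul_sum_of_sq_le_mul s
            (fun i _ => le_min (sq_nonneg _) (sq_nonneg _))
            (fun i _ => le_max_of_le_left (sq_nonneg _))
            (fun i _ => by rw [min_mul_max, mul_pow])
      _ ≤ m * (2 * n - m) := mul_le_mul_of_nonneg_left hmax hm_nonneg
  linarith

/-- This is the triangle inequality for the complex numbers `a i + b i * I`. -/
lemma sq_sum_add_sq_sum_le_sq_sum {a b c : ι → ℝ} (hc : ∀ i ∈ s, 0 ≤ c i)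
    (h : ∀ i ∈ s, a i ^ 2 + b i ^ 2 ≤ c i ^ 2) :
    (∑ i ∈ s, a i) ^ 2 + (∑ i ∈ s, b i) ^ 2 ≤ (∑ i ∈ s, c i) ^ 2 := by
  have hsq (p q : ℝ) : ‖(⟨p, q⟩ : ℂ)‖ ^ 2 = p ^ 2 + q ^ 2 := by
    rw [Complex.sq_norm, Complex.normSq_mk, sq, sq]
  have hle : ‖∑ i ∈ s, (⟨a i, b i⟩ : ℂ)‖ ≤ ∑ i ∈ s, c i :=
    norm_sum_le_of_le s fun i hi =>
      le_of_sq_le_sq ((hsq _ _).trans_le (h i hi)) (hc i hi)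
  have hsum : ∑ i ∈ s, (⟨a i, b i⟩ : ℂ) = ⟨∑ i ∈ s, a i, ∑ i ∈ s, b i⟩ :=
    Complex.ext (by simp) (by simp)
  rw [← hsq, ← hsum]
  exact pow_le_pow_left₀ (norm_nonneg _) hle 2

end Cone

namespace ProjGame

variable (G : ProjGame)

/-- A query of Bob: his question together with the constraint his answer is checked against. -/
abbrev Query : Type := G.Q2 × (G.A → Option G.A)

/-- The symmetrized distribution `msymFull` as a weight on pairs of queries. -/
noncomputable def pairWeight (t : G.Query × G.Query) : ℝ :=
  G.msymFull t.1.1 t.2.1 t.1.2 t.2.2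

/-- The answer weights that a query `e` induces on Alice's side from Bob's weights `f`. -/
def project (f : G.Q2 × G.A → ℝ) (e : G.Query) : G.A → ℝ :=
  fiberSum e.2 fun β => f (e.1, β)

lemma wU_eq_sum (u : G.Q1) : G.wU u = ∑ e : G.Query, G.μ (u, e) := by
  rw [wU, Fintype.sum_prod_type]

lemma wU_nonneg (u : G.Q1) : 0 ≤ G.wU u :=
  G.wU_eq_sum u ▸ Finset.sum_nonneg fun _ _ => G.μ_nonneg _

lemma wV_nonneg (v : G.Q2) : 0 ≤ G.wV v :=
  Finset.sum_nonneg fun _ _ => Finset.sum_nonneg fun _ _ => G.μ_nonneg _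

lemma normVsq_nonneg (f : G.Q2 × G.A → ℝ) : 0 ≤ G.normVsq f :=
  Finset.sum_nonneg fun v _ =>
    mul_nonneg (G.wV_nonneg v) (Finset.sum_nonneg fun _ _ => sq_nonneg _)

lemma mul_wU_div_wU (u : G.Q1) (e : G.Query) : G.μ (u, e) * G.wU u / G.wU u = G.μ (u, e) := by
  refine mul_div_cancel_of_imp fun hu => ?_
  rw [wU_eq_sum, Finset.sum_eq_zero_iff_of_nonneg fun _ _ => G.μ_nonneg _] at hu
  exact hu e (Finset.mem_univ e)

lemma op_eq_sum_project (f : G.Q2 × G.A → ℝ) (u : G.Q1) (α : G.A) :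
    G.op f (u, α) = (∑ e : G.Query, G.μ (u, e) * G.project f e α) / G.wU u := by
  simp only [op, Fintype.sum_prod_type, project, fiberSum]

lemma pairWeight_nonneg (t : G.Query × G.Query) : 0 ≤ G.pairWeight t :=
  Finset.sum_nonneg fun u _ =>
    div_nonneg (mul_nonneg (G.μ_nonneg _) (G.μ_nonneg _)) (G.wU_nonneg u)

lemma pairWeight_swap (t : G.Query × G.Query) : G.pairWeight t.swap = G.pairWeight t :=
  Finset.sum_congr rfl fun _ _ => by rw [mul_comm]; rfl

lemma sum_pairWeight_right (e : G.Query) : ∑ e', G.pairWeight (e, e') = ∑ u, G.μ (u, e) := by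
  simp only [pairWeight, msymFull]
  rw [Finset.sum_comm]
  refine Finset.sum_congr rfl fun u _ => ?_
  rw [← Finset.sum_div, ← Finset.mul_sum, ← wU_eq_sum, mul_wU_div_wU]

lemma sum_pairWeight_mul_fst (X : G.Q2 → ℝ) :
    ∑ t, G.pairWeight t * X t.1.1 = ∑ v, G.wV v * X v := by
  simp only [Fintype.sum_prod_type (α₁ := G.Query), ← Finset.sum_mul, sum_pairWeight_right]
  simp only [Fintype.sum_prod_type, ← Finset.sum_mul, wV]
  exact Finset.sum_congr rfl fun v _ => by rw [Finset.sum_comm]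

lemma sum_pairWeight_mul_snd (X : G.Q2 → ℝ) :
    ∑ t, G.pairWeight t * X t.2.1 = ∑ v, G.wV v * X v := by
  rw [← sum_pairWeight_mul_fst, ← (Equiv.prodComm G.Query G.Query).sum_comp]
  exact Finset.sum_congr rfl fun t _ => congrArg (· * X t.1.1) (G.pairWeight_swap t)

lemma wU_mul_sum_sq_op (f : G.Q2 × G.A → ℝ) (u : G.Q1) :
    G.wU u * ∑ α, G.op f (u, α) ^ 2 = ∑ t : G.Query × G.Query,
      G.μ (u, t.1) * G.μ (u, t.2) / G.wU u * ∑ α, G.project f t.1 α * G.project f t.2 α := by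
  have hcancel (w x : ℝ) : w * (x / w) ^ 2 = x * x / w := by
    rcases eq_or_ne w 0 with rfl | hw
    · simp
    · field_simp
  calc G.wU u * ∑ α, G.op f (u, α) ^ 2
      = ∑ α, (∑ e : G.Query, G.μ (u, e) * G.project f e α) *
          (∑ e : G.Query, G.μ (u, e) * G.project f e α) / G.wU u := by
        rw [Finset.mul_sum]
        simp only [op_eq_sum_project, hcancel]
    _ = ∑ α, ∑ t : G.Query × G.Query,
          G.μ (u, t.1) * G.μ (u, t.2) / G.wU u * (G.project f t.1 α * G.project f t.2 α) := by
        refine Finset.sum_congr rfl fun α _ => ?_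
        rw [Fintype.sum_mul_sum, ← Fintype.sum_prod_type', Finset.sum_div]
        exact Finset.sum_congr rfl fun t _ => by ring
    _ = _ := by
        rw [Finset.sum_comm]
        simp only [Finset.mul_sum]

lemma normUsq_op (f : G.Q2 × G.A → ℝ) :
    G.normUsq (G.op f) =
      ∑ t, G.pairWeight t * ∑ α, G.project f t.1 α * G.project f t.2 α := by
  simp only [normUsq, wU_mul_sum_sq_op, pairWeight, msymFull, Finset.sum_mul]
  exact Finset.sum_comm

variable {G} {h : G.Q2 × G.A → ℝ} (hdet : ∀ v, (Function.support fun β => h (v, β)).Subsingleton)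
include hdet

lemma normUsq_op_threshold {τ : ℝ} (hτ : 0 ≤ τ) :
    G.normUsq (G.op fun p => threshold τ (h p)) = ∑ t, G.pairWeight t *
      ∑ α, threshold τ (G.project h t.1 α) * threshold τ (G.project h t.2 α) := by
  have hproject (e : G.Query) (α : G.A) :
      G.project (fun p => threshold τ (h p)) e α = threshold τ (G.project h e α) :=
    fiberSum_comp e.2 (hdet e.1) (threshold_zero hτ) α
  simp only [normUsq_op, hproject]

lemma integral_normUsq_op_threshold {T : ℝ} (hT : 0 ≤ T) (hhT : ∀ p, h p ^ 2 ≤ T) :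
    ∫ τ in (0 : ℝ)..T, G.normUsq (G.op fun p => threshold τ (h p)) =
      ∑ t, G.pairWeight t *
        ∑ α, min (G.project h t.1 α ^ 2) (G.project h t.2 α ^ 2) := by
  have hproject (e : G.Query) (α : G.A) : G.project h e α ^ 2 ≤ T :=
    fiberSum_mem e.2 (hdet e.1) (s := {x | x ^ 2 ≤ T}) (by simpa using hT)
      (fun β => hhT (e.1, β)) α
  have hint (t : G.Query × G.Query) (α : G.A) := intervalIntegrable_threshold_mul_threshold
    (G.project h t.1 α) (G.project h t.2 α) 0 T
  have hint_sum (t : G.Query × G.Query) : IntervalIntegrable (fun τ => ∑ α,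
      threshold τ (G.project h t.1 α) * threshold τ (G.project h t.2 α))
      MeasureTheory.volume 0 T := by
    simpa only [Finset.sum_fn] using IntervalIntegrable.sum Finset.univ fun α _ => hint t α
  calc ∫ τ in (0 : ℝ)..T, G.normUsq (G.op fun p => threshold τ (h p))
      = ∫ τ in (0 : ℝ)..T, ∑ t, G.pairWeight t *
          ∑ α, threshold τ (G.project h t.1 α) * threshold τ (G.project h t.2 α) := by
        refine intervalIntegral.integral_congr fun τ hτ => ?_
        rw [Set.uIcc_of_le hT] at hτ
        exact normUsq_op_threshold hdet hτ.1
    _ = ∑ t, G.pairWeight t * ∑ α, ∫ τ in (0 : ℝ)..T,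
          threshold τ (G.project h t.1 α) * threshold τ (G.project h t.2 α) := by
        rw [intervalIntegral.integral_finsetSum fun t _ => (hint_sum t).const_mul _]
        simp only [intervalIntegral.integral_const_mul,
          intervalIntegral.integral_finsetSum fun α _ => hint _ α]
    _ = _ := by simp only [integral_threshold_mul_threshold (hproject _ _)]

lemma sq_normVsq_sub_add_sq_normUsq_op_le :
    (G.normVsq h - ∑ t, G.pairWeight t *
        ∑ α, min (G.project h t.1 α ^ 2) (G.project h t.2 α ^ 2)) ^ 2 +
      G.normUsq (G.op h) ^ 2 ≤ G.normVsq h ^ 2 := by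
  let X (v : G.Q2) : ℝ := ∑ β, h (v, β) ^ 2
  have hX_nonneg (v : G.Q2) : 0 ≤ X v := Finset.sum_nonneg fun _ _ => sq_nonneg _
  have hproject (e : G.Query) : ∑ α, G.project h e α ^ 2 ≤ X e.1 :=
    sum_sq_fiberSum_le e.2 (hdet e.1)
  have hnormV : G.normVsq h = ∑ t, G.pairWeight t * ((X t.1.1 + X t.2.1) / 2) := by
    simp only [← mul_div_assoc, mul_add, ← Finset.sum_div, Finset.sum_add_distrib,
      sum_pairWeight_mul_fst, sum_pairWeight_mul_snd]
    exact (add_self_div_two _).symm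
  rw [hnormV, normUsq_op, ← Finset.sum_sub_distrib]
  refine sq_sum_add_sq_sum_le_sq_sum _ (fun t _ => ?_) fun t _ => ?_
  · have := hX_nonneg t.1.1
    have := hX_nonneg t.2.1
    exact mul_nonneg (G.pairWeight_nonneg t) (by linarith)
  · rw [← mul_sub, mul_pow, mul_pow, mul_pow, ← mul_add]
    refine mul_le_mul_of_nonneg_left ?_ (sq_nonneg _)
    refine sq_sub_sum_min_add_sq_sum_mul_le _ ?_
    linarith [hproject t.1, hproject t.2]

end ProjGame

theorem cheeger_projection_games_general (G : ProjGame) (h : G.Q2 × G.A → ℝ) {T : ℝ}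
    (hT : ∀ p, h p ^ 2 ≤ T) (hdet : ∀ v, (Function.support fun β => h (v, β)).Subsingleton)
    {ρ : ℝ} (hρ : G.normUsq (G.op h) = ρ * G.normVsq h) :
    (∀ v, ∫ τ in (0 : ℝ)..T, (∑ β, threshold τ (h (v, β))) ^ 2 = (∑ β, h (v, β)) ^ 2) ∧
    (1 - √(1 - ρ ^ 2)) * G.normVsq h ≤
      ∫ τ in (0 : ℝ)..T, G.normUsq (G.op fun p => threshold τ (h p)) := by
  have hT_nonneg : 0 ≤ T := (sq_nonneg _).trans (hT (Classical.arbitrary _))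
  refine ⟨fun v => integral_sq_sum_threshold hT_nonneg (hdet v) fun β => hT (v, β), ?_⟩
  rw [ProjGame.integral_normUsq_op_threshold hdet hT_nonneg hT]
  have hcone := ProjGame.sq_normVsq_sub_add_sq_normUsq_op_le hdet
  set M := ∑ t, G.pairWeight t * ∑ α, min (G.project h t.1 α ^ 2) (G.project h t.2 α ^ 2)
  have hsqrt : G.normVsq h - M ≤ √((1 - ρ ^ 2) * G.normVsq h ^ 2) := by
    refine Real.le_sqrt_of_sq_le ?_
    rw [hρ] at hcone
    linarith
  rw [Real.sqrt_mul' _ (sq_nonneg _), Real.sqrt_sq (G.normVsq_nonneg h)] at hsqrt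
  linarith

/-- **Cheeger inequality for projection games.** For a deterministic `[0,1]`-valued
fractional assignment `h` with `‖h‖ > 0` and `‖Gh‖² = ρ‖h‖²`, the threshold roundings
`h_τ(v,β) = [h(v,β)² > τ]` satisfy: (i) `∫₀¹ (∑_β h_τ(v,β))² dτ = (∑_β h(v,β))²` for
every `v`, and (ii) `∫₀¹ ‖G h_τ‖² dτ ≥ (1 - √(1-ρ²))·‖h‖²`. -/
theorem cheeger_projection_games (G : ProjGame) (h : G.Q2 × G.A → ℝ)
    (h0 : ∀ p, 0 ≤ h p) (h1 : ∀ p, h p ≤ 1)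
    (hdet : ∀ (v : G.Q2) (β β' : G.A), h (v, β) ≠ 0 → h (v, β') ≠ 0 → β = β')
    (hpos : 0 < Real.sqrt (G.normVsq h))
    (ρ : ℝ) (hρ0 : 0 ≤ ρ) (hρ1 : ρ ≤ 1)
    (hρ : G.normUsq (G.op h) = ρ * G.normVsq h) :
    (∀ v : G.Q2,
      (∫ τ in (0:ℝ)..1, (∑ β, if (h (v, β)) ^ 2 > τ then (1 : ℝ) else 0) ^ 2)
        = (∑ β, h (v, β)) ^ 2) ∧
    ((1 - Real.sqrt (1 - ρ ^ 2)) * G.normVsq h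
      ≤ ∫ τ in (0:ℝ)..1, G.normUsq (G.op (fun p => if (h p) ^ 2 > τ then 1 else 0))) :=
  cheeger_projection_games_general G h (fun p => pow_le_one₀ (h0 p) (h1 p))
    (fun v β hβ β' hβ' => hdet v β β' hβ hβ') hρ
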